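/- arXiv:math-ph/0004030 — 2 statements merged into one kernel-verified Lean document; each statement's English description precedes it below -/
import Mathlib

section
/- With the notation and hypotheses of the context, for every λ ∈ ℂ one has det[(λI − Z)·X + I] = γ·p(λ), where p(λ) = fᵀ·adjugate(λI − Z)·v and γ = wᵀ·e. -/
open Matrix

/-!
The commutator relation turns `(λI − Z)X + I` into `X(λI − Z) + e fᵀ`, a rank-one perturbation of a
product. By the matrix determinant lemma its determinant is
`det X · det (λI − Z) + fᵀ · adj (λI − Z) · adj X · e`, and substituting `adj X = v wᵀ` factors the
last term as `(wᵀ e)(fᵀ · adj (λI − Z) · v)`.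

The matrix determinant lemma is needed at singular matrices, hence in its division-free form. After
multiplication by `det A` it is a block-matrix computation, and `det A` can be cancelled once `A` is
replaced by `A + tI` with `t` an indeterminate, because `det (A + tI)` is monic in `t`.
-/

section MatrixDeterminantLemma

variable {n R : Type*} [Fintype n] [DecidableEq n] [CommRing R]

lemma det_mul_det_add_vecMulVec (A : Matrix n n R) (u v : n → R) :
    A.det * (A + vecMulVec u v).det = A.det * (A.det + v ⬝ᵥ (A.adjugate *ᵥ u)) := by
  let U := replicateCol Unit u
  let V := replicateRow Unit v
  have schur : (fromBlocks A (-U) V 1).det = (A + vecMulVec u v).det := by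
    rw [det_fromBlocks_one₂₂, Matrix.neg_mul, sub_neg_eq_add, vecMulVec_eq Unit]
  have elimination : fromBlocks A (-U) V 1 * fromBlocks 1 (A.adjugate * U) 0 (A.det • 1) =
      fromBlocks A 0 V (V * (A.adjugate * U) + A.det • 1) := by
    simp [fromBlocks_multiply, ← Matrix.mul_assoc, mul_adjugate]
  have corner : (V * (A.adjugate * U) + A.det • 1).det = A.det + v ⬝ᵥ (A.adjugate *ᵥ u) := by
    rw [← replicateCol_mulVec, det_unique, Matrix.add_apply, replicateRow_mul_replicateCol_apply,
      Matrix.smul_apply, one_apply_eq, smul_eq_mul, mul_one, add_comm]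
  calc A.det * (A + vecMulVec u v).det
      = (fromBlocks A (-U) V 1 * fromBlocks 1 (A.adjugate * U) 0 (A.det • 1)).det := by
        rw [det_mul, schur, det_fromBlocks_zero₂₁, det_one, one_mul, det_smul, Fintype.card_unit,
          pow_one, det_one, mul_one, mul_comm]
    _ = A.det * (A.det + v ⬝ᵥ (A.adjugate *ᵥ u)) := by
        rw [elimination, det_fromBlocks_zero₁₂, corner]

lemma monic_det_map_C_add_X_smul_one (A : Matrix n n R) :
    (A.map Polynomial.C + (Polynomial.X : Polynomial R) • 1).det.Monic := by
  rw [Polynomial.Monic.def, add_comm, Polynomial.leadingCoeff_det_X_one_add_C]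

theorem det_add_vecMulVec (A : Matrix n n R) (u v : n → R) :
    (A + vecMulVec u v).det = A.det + v ⬝ᵥ (A.adjugate *ᵥ u) := by
  let A' : Matrix n n (Polynomial R) := A.map Polynomial.C + (Polynomial.X : Polynomial R) • 1
  let u' : n → Polynomial R := Polynomial.C ∘ u
  let v' : n → Polynomial R := Polynomial.C ∘ v
  let ev : Polynomial R →+* R := Polynomial.evalRingHom 0
  have generic : (A' + vecMulVec u' v').det = A'.det + v' ⬝ᵥ (A'.adjugate *ᵥ u') :=
    (monic_det_map_C_add_X_smul_one A).isRegular.left (det_mul_det_add_vecMulVec A' u' v')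
  have ev_A' : ev.mapMatrix A' = A := by ext; simp [A', ev]
  have ev_u' : ev ∘ u' = u := by ext; simp [u', ev]
  have ev_v' : ev ∘ v' = v := by ext; simp [v', ev]
  have ev_sum : ev.mapMatrix (A' + vecMulVec u' v') = A + vecMulVec u v := by
    rw [map_add, ev_A']
    ext
    simp [vecMulVec_apply, u', v', ev]
  have ev_mulVec : ev ∘ (A'.adjugate *ᵥ u') = A.adjugate *ᵥ u := by
    ext i
    rw [Function.comp_apply, RingHom.map_mulVec, ev_u', ← RingHom.mapMatrix_apply,
      RingHom.map_adjugate, ev_A']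
  have specialized := congrArg ev generic
  rwa [map_add, RingHom.map_det, RingHom.map_det, ev_sum, ev_A', RingHom.map_dotProduct, ev_v',
    ev_mulVec] at specialized

end MatrixDeterminantLemma

lemma smul_one_sub_mul_add_one {R A : Type*} [CommSemiring R] [Ring A] [Algebra R A]
    (r : R) (x z : A) :
    (r • 1 - z) * x + 1 = x * (r • 1 - z) + (x * z - z * x + 1) := by
  rw [sub_mul, mul_sub, smul_one_mul, mul_smul_one]
  abel

lemma det_mul_add_vecMulVec_of_adjugate_eq {n R : Type*} [Fintype n] [DecidableEq n] [CommRing R]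
    {A : Matrix n n R} {v w : n → R} (hA : A.adjugate = vecMulVec v w)
    (B : Matrix n n R) (e f : n → R) :
    (A * B + vecMulVec e f).det = A.det * B.det + (w ⬝ᵥ e) * (f ⬝ᵥ (B.adjugate *ᵥ v)) := by
  rw [det_add_vecMulVec, det_mul, adjugate_mul_distrib, hA, ← mulVec_mulVec, vecMulVec_mulVec,
    op_smul_eq_smul, mulVec_smul, dotProduct_smul, smul_eq_mul]

theorem det_left_factor_general {n R : Type*} [Fintype n] [DecidableEq n] [CommRing R]
    {X Z : Matrix n n R} {e f v w : n → R}
    (hef : X * Z - Z * X + 1 = vecMulVec e f) (hvw : X.adjugate = vecMulVec v w) (lam : R) :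
    ((lam • (1 : Matrix n n R) - Z) * X + 1).det =
      X.det * (lam • (1 : Matrix n n R) - Z).det +
        (w ⬝ᵥ e) * (f ⬝ᵥ ((lam • (1 : Matrix n n R) - Z).adjugate *ᵥ v)) := by
  rw [smul_one_sub_mul_add_one, hef, det_mul_add_vecMulVec_of_adjugate_eq hvw]

/-- `det[(λI − Z)·X + I] = γ·p(λ)` where `p(λ) = fᵀ·adj(λI − Z)·v`
and `γ = wᵀ·e`. -/
theorem det_left_factor (n : ℕ) (hn : 1 ≤ n)
    (X Z : Matrix (Fin n) (Fin n) ℂ)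
    (hrank : (X * Z - Z * X + 1).rank = 1)
    (hdet : X.det = 0)
    (e f v w : Fin n → ℂ)
    (hef : X * Z - Z * X + 1 = vecMulVec e f)
    (hvw : X.adjugate = vecMulVec v w)
    (lam : ℂ) :
    ((lam • (1 : Matrix (Fin n) (Fin n) ℂ) - Z) * X + 1).det =
      (w ⬝ᵥ e) * (f ⬝ᵥ ((lam • (1 : Matrix (Fin n) (Fin n) ℂ) - Z).adjugate *ᵥ v)) := by
  rw [det_left_factor_general hef hvw, hdet, zero_mul, zero_add]
end

section
/- Let n ≥ 1, let X, Z be n×n complex matrices, let η ∈ ℂ with η ≠ 0, and let λ₁, λ₂ ∈ ℂ not be eigenvalues of Z. For m ∈ ℂ define the matrix 𝒳(m) = −η·X·(λ₁I − Z) − m·η·(λ₂I − Z)⁻¹·(λ₁I − Z), and for x, m ∈ ℂ define τ(x, m) = det(X + (x/η)·(λ₁I − Z)⁻¹ + m·(λ₂I − Z)⁻¹). Then for all x, m ∈ ℂ, det(x·I − 𝒳(m)) = ηⁿ·det(λ₁I − Z)·τ(x, m). In particular, the eigenvalues of 𝒳(m) are exactly the roots of the polynomial x ↦ τ(x, m).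 -/
open Matrix

section FreeFlow

variable {R ι : Type*} [CommRing R] [Fintype ι] [DecidableEq ι]

theorem det_smul_one_add_mul (Y : Matrix ι ι R) {A : Matrix ι ι R} (hA : IsUnit A) (y : R) :
    (y • (1 : Matrix ι ι R) + Y * A).det = A.det * (Y + y • A⁻¹).det := by
  have factor : y • (1 : Matrix ι ι R) + Y * A = (Y + y • A⁻¹) * A := by
    rw [add_mul, smul_mul_assoc, nonsing_inv_mul A ((isUnit_iff_isUnit_det A).mp hA), add_comm]
  rw [factor, det_mul, mul_comm]

/-- The free-flow matrix `𝒳(m)`, with an arbitrary matrix `A` in place of `λ₁I − Z` and an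
arbitrary matrix `B` in place of `(λ₂I − Z)⁻¹`. -/
def freeFlow (X A B : Matrix ι ι R) (η m : R) : Matrix ι ι R :=
  (-η) • (X * A) - (m * η) • (B * A)

/-- The tau-function `τ(x, m)` of the free flow, with `A` and `B` as in `freeFlow`; taking `η` to be
a unit gives `x / η` a meaning over a commutative ring. -/
noncomputable def tauFunction (X A B : Matrix ι ι R) (η : Rˣ) (x m : R) : R :=
  (X + (↑η⁻¹ * x) • A⁻¹ + m • B).det

theorem det_smul_one_sub_freeFlow (X : Matrix ι ι R) {A : Matrix ι ι R} (hA : IsUnit A)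
    (B : Matrix ι ι R) (η : Rˣ) (x m : R) :
    (x • (1 : Matrix ι ι R) - freeFlow X A B η m).det =
      η ^ Fintype.card ι * A.det * tauFunction X A B η x m := by
  have factor : x • (1 : Matrix ι ι R) - freeFlow X A B η m =
      (η : R) • ((↑η⁻¹ * x) • (1 : Matrix ι ι R) + (X + m • B) * A) := by
    rw [freeFlow, add_mul, smul_mul_assoc, smul_add, smul_smul, Units.mul_inv_cancel_left]
    module
  rw [factor, det_smul, det_smul_one_add_mul _ hA, tauFunction, add_right_comm, mul_assoc]

theorem charpoly_eq_tau_general (X : Matrix ι ι R) {A : Matrix ι ι R} (hA : IsUnit A)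
    (B : Matrix ι ι R) (η : Rˣ) (x m : R) :
    (x • (1 : Matrix ι ι R) - freeFlow X A B η m).det =
        η ^ Fintype.card ι * A.det * tauFunction X A B η x m ∧
      (x ∈ spectrum R (freeFlow X A B η m) ↔ ¬IsUnit (tauFunction X A B η x m)) := by
  have prefactor_isUnit : IsUnit ((η : R) ^ Fintype.card ι * A.det) :=
    (η.isUnit.pow _).mul ((isUnit_iff_isUnit_det A).mp hA)
  refine ⟨det_smul_one_sub_freeFlow X hA B η x m, ?_⟩
  rw [spectrum.mem_iff, Algebra.algebraMap_eq_smul_one, isUnit_iff_isUnit_det,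
    det_smul_one_sub_freeFlow X hA, prefactor_isUnit.mul_left_iff]

end FreeFlow

/-- the characteristic polynomial of the free-flow matrix
`𝒳(m) = −η X (λ₁I − Z) − mη (λ₂I − Z)⁻¹ (λ₁I − Z)` is proportional to the
tau-function: `det(xI − 𝒳(m)) = ηⁿ det(λ₁I − Z) τ(x, m)`; in particular the
eigenvalues of `𝒳(m)` are exactly the roots of `x ↦ τ(x, m)`. -/
theorem charpoly_eq_tau (n : ℕ) (hn : 1 ≤ n)
    (X Z : Matrix (Fin n) (Fin n) ℂ)
    (η : ℂ) (hη : η ≠ 0)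
    (lam₁ lam₂ : ℂ)
    (hlam₁ : lam₁ ∉ spectrum ℂ Z) (hlam₂ : lam₂ ∉ spectrum ℂ Z)
    (𝒳 : ℂ → Matrix (Fin n) (Fin n) ℂ)
    (h𝒳 : ∀ m : ℂ, 𝒳 m =
      (-η) • (X * (lam₁ • (1 : Matrix (Fin n) (Fin n) ℂ) - Z)) -
        (m * η) • ((lam₂ • (1 : Matrix (Fin n) (Fin n) ℂ) - Z)⁻¹ *
          (lam₁ • (1 : Matrix (Fin n) (Fin n) ℂ) - Z)))
    (τ : ℂ → ℂ → ℂ)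
    (hτ : ∀ x m : ℂ, τ x m =
      (X + (x / η) • (lam₁ • (1 : Matrix (Fin n) (Fin n) ℂ) - Z)⁻¹ +
        m • (lam₂ • (1 : Matrix (Fin n) (Fin n) ℂ) - Z)⁻¹).det) :
    ∀ x m : ℂ,
      (x • (1 : Matrix (Fin n) (Fin n) ℂ) - 𝒳 m).det =
        η ^ n * (lam₁ • (1 : Matrix (Fin n) (Fin n) ℂ) - Z).det * τ x m ∧
      (x ∈ spectrum ℂ (𝒳 m) ↔ τ x m = 0) := by
  have hA : IsUnit (lam₁ • (1 : Matrix (Fin n) (Fin n) ℂ) - Z) := by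
    rwa [spectrum.notMem_iff, Algebra.algebraMap_eq_smul_one] at hlam₁
  simpa only [h𝒳, hτ, freeFlow, tauFunction, Units.val_mk0, Units.val_inv_eq_inv_val,
    inv_mul_eq_div, Fintype.card_fin, isUnit_iff_ne_zero, not_not]
    using charpoly_eq_tau_general X hA (lam₂ • 1 - Z)⁻¹ (Units.mk0 η hη)
end
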